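/- (Split error identity for linear problems.) Under the nested linear DWR setting below, the total discretization error in the goal functional splits exactly into a temporal and a spatial part: J(u) − J(u_kh) = [F(z − z_k) − A(u_kh, z − z_k)] + [F(z_k − z_kh) − A(u_kh, z_k − z_kh)]. -/

import Mathlib

/-!
Testing with the adjoint solution `z` turns the goal error of any approximation into its primal
residual evaluated at `z`. The residual of a Galerkin solution vanishes on the discrete test space,
so a discrete element may be subtracted from `z`, and by linearity the resulting residual splits at
an intermediate element.
-/

section PrimalResidual

variable {R X Y N : Type*} [CommSemiring R] [AddCommMonoid X] [AddCommGroup Y] [AddCommGroup N]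
  [Module R X] [Module R Y] [Module R N]

/-- The primal residual `φ ↦ F φ - A v φ` of an approximation `v` to the solution `u` of
`A u = F`, as a linear map on the test space. The trial space `X` and the test space `Y` may differ,
as in Petrov–Galerkin methods. -/
def primalResidual (A : X →ₗ[R] Y →ₗ[R] N) (F : Y →ₗ[R] N) (v : X) : Y →ₗ[R] N :=
  F - A v

variable {A : X →ₗ[R] Y →ₗ[R] N} {F : Y →ₗ[R] N} {J : X →ₗ[R] N}

theorem primalResidual_apply (v : X) (φ : Y) : primalResidual A F v φ = F φ - A v φ :=
  rfl

theorem goal_sub_goal_eq_primalResidual {u : X} {z : Y} (hu : ∀ φ, A u φ = F φ)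
    (hz : ∀ ψ, A ψ z = J ψ) (v : X) : J u - J v = primalResidual A F v z := by
  rw [primalResidual_apply, ← hz u, ← hz v, hu z]

theorem primalResidual_eq_zero_of_mem {Yh : Submodule R Y} {uh : X}
    (huh : ∀ φ ∈ Yh, A uh φ = F φ) {φ : Y} (hφ : φ ∈ Yh) : primalResidual A F uh φ = 0 := by
  rw [primalResidual_apply, huh φ hφ, sub_self]

theorem goal_sub_goal_eq_primalResidual_sub {u uh : X} {z : Y} (hu : ∀ φ, A u φ = F φ)
    (hz : ∀ ψ, A ψ z = J ψ) {Yh : Submodule R Y} (huh : ∀ φ ∈ Yh, A uh φ = F φ) {φ : Y}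
    (hφ : φ ∈ Yh) : J u - J uh = primalResidual A F uh (z - φ) := by
  rw [map_sub, primalResidual_eq_zero_of_mem huh hφ, sub_zero,
    goal_sub_goal_eq_primalResidual hu hz]

theorem split_error_identity_linear_general {u uh : X} {z : Y} (hu : ∀ φ, A u φ = F φ)
    (hz : ∀ ψ, A ψ z = J ψ) {Yh : Submodule R Y} (huh : ∀ φ ∈ Yh, A uh φ = F φ) (w : Y) {φ : Y}
    (hφ : φ ∈ Yh) :
    J u - J uh = (F (z - w) - A uh (z - w)) + (F (w - φ) - A uh (w - φ)) :=
  calc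
    J u - J uh = primalResidual A F uh (z - φ) :=
      goal_sub_goal_eq_primalResidual_sub hu hz huh hφ
    _ = primalResidual A F uh (z - w) + primalResidual A F uh (w - φ) := by
      rw [← map_add, sub_add_sub_cancel]
    _ = (F (z - w) - A uh (z - w)) + (F (w - φ) - A uh (w - φ)) := by
      simp only [primalResidual_apply]

end PrimalResidual

/-- Split error identity for linear problems:
`J(u) − J(u_kh) = [F(z − z_k) − A(u_kh, z − z_k)] + [F(z_k − z_kh) − A(u_kh, z_k − z_kh)]`. -/
theorem split_error_identity_linear
    {X : Type*} [AddCommGroup X] [Module ℝ X]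
    (A : X →ₗ[ℝ] X →ₗ[ℝ] ℝ) (F J : X →ₗ[ℝ] ℝ)
    (Xkh Xk : Submodule ℝ X) (hnested : Xkh ≤ Xk)
    (u z uk zk ukh zkh : X)
    (hu : ∀ φ : X, A u φ = F φ)
    (hz : ∀ ψ : X, A ψ z = J ψ)
    (huk : uk ∈ Xk) (hzk : zk ∈ Xk)
    (huk_sol : ∀ φk ∈ Xk, A uk φk = F φk)
    (hzk_sol : ∀ ψk ∈ Xk, A ψk zk = J ψk)
    (hukh : ukh ∈ Xkh) (hzkh : zkh ∈ Xkh)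
    (hukh_sol : ∀ φh ∈ Xkh, A ukh φh = F φh)
    (hzkh_sol : ∀ ψh ∈ Xkh, A ψh zkh = J ψh) :
    J u - J ukh = (F (z - zk) - A ukh (z - zk)) + (F (zk - zkh) - A ukh (zk - zkh)) :=
  split_error_identity_linear_general hu hz hukh_sol zk hzkh
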